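/- Let (X, 𝒜, μ) be a probability space, M ∈ ℕ with M ≥ 1, e : X → Fin M → ℝ with x ↦ e x m measurable for each m, and c : Fin M → ℝ an injective cost function with 0 ≤ c m ≤ c_max for all m. For each λ ≥ 0 let r_λ : X → Fin M be a measurable router satisfying, for every x ∈ X and m ∈ Fin M, e x (r_λ x) + λ·c (r_λ x) ≤ e x m + λ·c m. Assume that for every pair m ≠ k in Fin M and every t ∈ ℝ, μ({x : (e x k − e x m)/(c m − c k) = t}) = 0. Then the map λ ↦ ∫ c (r_λ x) dμ(x) is continuous on [0, ∞). -/

import Mathlib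

open MeasureTheory

/-!
Fix an input. A model whose cost-adjusted loss at `λ₀` exceeds that of another model still does so
for `λ` near `λ₀`, so every model optimal for such `λ` is already optimal at `λ₀`. Unless two models
of different cost tie at `λ₀`, i.e. unless `λ₀` is a crossing value, all models optimal at `λ₀` have
the same cost, and the cost of the routed model is locally constant at `λ₀`. Almost no input has
`λ₀` as a crossing value, so dominated convergence carries this over to the integral.
-/

section Argmin

open Filter Topology

variable {ι Λ α : Type*} [Finite ι] [LinearOrder α] [TopologicalSpace α] [OrderClosedTopology α]

theorem eventually_forall_le_of_tendsto {l : Filter Λ} {f : Λ → ι → α} {g : ι → α} {ρ : Λ → ι}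
    (hf : ∀ i, Tendsto (fun a => f a i) l (𝓝 (g i)))
    (hρ : ∀ᶠ a in l, ∀ i, f a (ρ a) ≤ f a i) :
    ∀ᶠ a in l, ∀ i, g (ρ a) ≤ g i := by
  have hlt : ∀ᶠ a in l, ∀ i j, g i < g j → f a i < f a j := by
    simp only [eventually_all]
    exact fun i j => (hf i).eventually_lt (hf j)
  filter_upwards [hlt, hρ] with a ha hmin i
  exact le_of_not_gt fun h => (ha i (ρ a) h).not_ge (hmin i)

end Argmin

section Router

open Filter Topology

variable {ι : Type*} {e c : ι → ℝ}

/-- The cost-adjusted loss `e m + λ · c m` of model `m` on a fixed input, where `e` lists the losses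
of the models on that input; its minimizers over `m` are the models an optimal router may choose. -/
def costAdjustedLoss (e c : ι → ℝ) (lam : ℝ) (m : ι) : ℝ :=
  e m + lam * c m

/-- The crossing value of models `m` and `k` on a fixed input: the trade-off parameter at which
their cost-adjusted losses agree. It is the junk value `0` when `c m = c k`. -/
noncomputable def crossingValue (e c : ι → ℝ) (m k : ι) : ℝ :=
  (e k - e m) / (c m - c k)

theorem continuous_costAdjustedLoss (e c : ι → ℝ) (m : ι) :
    Continuous fun lam => costAdjustedLoss e c lam m := by
  unfold costAdjustedLoss
  fun_prop

theorem crossingValue_eq_iff {m k : ι} (hc : c m ≠ c k) {lam : ℝ} :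
    crossingValue e c m k = lam ↔ costAdjustedLoss e c lam m = costAdjustedLoss e c lam k := by
  rw [crossingValue, div_eq_iff (sub_ne_zero.mpr hc), costAdjustedLoss, costAdjustedLoss]
  constructor <;> intro h <;> linarith

theorem cost_eq_of_forall_costAdjustedLoss_le {lam : ℝ}
    (hlam : ∀ m k, c m ≠ c k → crossingValue e c m k ≠ lam) {m k : ι}
    (hm : ∀ i, costAdjustedLoss e c lam m ≤ costAdjustedLoss e c lam i)
    (hk : ∀ i, costAdjustedLoss e c lam k ≤ costAdjustedLoss e c lam i) :
    c m = c k := by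
  by_contra hmk
  exact hlam m k hmk <| (crossingValue_eq_iff hmk).mpr <| (hm k).antisymm (hk m)

variable [Finite ι] {s : Set ℝ}

theorem eventuallyEq_cost_of_forall_crossingValue_ne {ρ : ℝ → ι}
    (hρ : ∀ lam ∈ s, ∀ m, costAdjustedLoss e c lam (ρ lam) ≤ costAdjustedLoss e c lam m)
    {lam₀ : ℝ} (hlam₀ : lam₀ ∈ s) (hcross : ∀ m k, c m ≠ c k → crossingValue e c m k ≠ lam₀) :
    (fun lam => c (ρ lam)) =ᶠ[𝓝[s] lam₀] fun _ => c (ρ lam₀) := by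
  have hmin : ∀ᶠ lam in 𝓝[s] lam₀, ∀ m,
      costAdjustedLoss e c lam₀ (ρ lam) ≤ costAdjustedLoss e c lam₀ m :=
    eventually_forall_le_of_tendsto
      (fun m => (continuous_costAdjustedLoss e c m).continuousWithinAt)
      (eventually_mem_nhdsWithin.mono hρ)
  exact hmin.mono fun lam h => cost_eq_of_forall_costAdjustedLoss_le hcross h (hρ lam₀ hlam₀)

theorem routed_cost_continuousOn_general {X : Type*} [MeasurableSpace X] {μ : Measure X}
    [IsFiniteMeasure μ] {e : X → ι → ℝ} {r : ℝ → X → ι}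
    (hmeas : ∀ lam ∈ s, AEStronglyMeasurable (fun x => c (r lam x)) μ)
    (hopt : ∀ lam ∈ s, ∀ x m,
      costAdjustedLoss (e x) c lam (r lam x) ≤ costAdjustedLoss (e x) c lam m)
    (hatom : ∀ m k, c m ≠ c k → ∀ t ∈ s, μ {x | crossingValue (e x) c m k = t} = 0) :
    ContinuousOn (fun lam => ∫ x, c (r lam x) ∂μ) s := by
  intro lam₀ hlam₀
  obtain ⟨C, hC⟩ : BddAbove (Set.range fun m => ‖c m‖) := (Set.finite_range _).bddAbove
  have hbound (m : ι) : ‖c m‖ ≤ C := hC (Set.mem_range_self m)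
  have hcross : ∀ᵐ x ∂μ, ∀ m k, c m ≠ c k → crossingValue (e x) c m k ≠ lam₀ := by
    simp only [ae_all_iff]
    exact fun m k hmk => measure_eq_zero_iff_ae_notMem.mp (hatom m k hmk lam₀ hlam₀)
  refine continuousWithinAt_of_dominated (eventually_mem_nhdsWithin.mono hmeas)
    (.of_forall fun lam => .of_forall fun x => hbound (r lam x)) (integrable_const C) ?_
  filter_upwards [hcross] with x hx
  exact continuousWithinAt_const.congr_of_eventuallyEq
    (eventuallyEq_cost_of_forall_crossingValue_ne (fun lam h => hopt lam h x) hlam₀ hx) rfl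

end Router

/-- Under the atomless crossing-value assumption, the routed cost of the pointwise
cost-adjusted-optimal router is continuous in the trade-off parameter `λ` on `[0, ∞)`. -/
theorem routed_cost_continuousOn
    {X : Type*} [MeasurableSpace X] (μ : Measure X) [IsProbabilityMeasure μ]
    (M : ℕ) (hM : 1 ≤ M) (e : X → Fin M → ℝ)
    (hemeas : ∀ m : Fin M, Measurable fun x => e x m)
    (c : Fin M → ℝ) (hc : Function.Injective c) (cmax : ℝ)
    (hc0 : ∀ m : Fin M, 0 ≤ c m) (hcmax : ∀ m : Fin M, c m ≤ cmax)
    (r : ℝ → X → Fin M) (hrmeas : ∀ lam : ℝ, Measurable (r lam))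
    (hopt : ∀ lam : ℝ, 0 ≤ lam → ∀ x : X, ∀ m : Fin M,
      e x (r lam x) + lam * c (r lam x) ≤ e x m + lam * c m)
    (hatom : ∀ m k : Fin M, m ≠ k → ∀ t : ℝ,
      μ {x | (e x k - e x m) / (c m - c k) = t} = 0) :
    ContinuousOn (fun lam => ∫ x, c (r lam x) ∂μ) (Set.Ici (0:ℝ)) :=
  routed_cost_continuousOn_general
    (fun lam _ => ((measurable_of_finite c).comp (hrmeas lam)).aestronglyMeasurable)
    hopt fun m k hmk t _ => hatom m k (ne_of_apply_ne c hmk) t
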